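/- arXiv:1805.10472 — 3 statements merged into one kernel-verified Lean document; each statement's English description precedes it below -/
import Mathlib

section
/- Let n ≥ 2, let η be the pseudo-Euclidean bilinear form of signature (2, n−1) on ℝ^{n+1}, let ξ : ℝ^{n+1} → ℝ^{n+1} be an η-skew linear map, and let N, X satisfy η(N,N) = −1, η(X,X) = 0, η(N,X) = 0, η(X, ξN) = 0, and suppose X is not an eigenvector of ξ. Then H(ξN, ξX) := η(ξN,ξN)·η(ξX,ξX) − η(ξN,ξX)² = 0 if and only if the three vectors X, ξX, ξN are linearly dependent. -/
/-!
The vectors `X`, `ξ X`, `ξ N` all lie in `W = N^⊥ ∩ X^⊥`, by skewness of `ξ` and the hypotheses.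
If `X ≠ 0`, the form `η` is positive semidefinite on `W`, and every null vector in `W` is a
multiple of `X` (`eta_orthogonal`): the span of `N` and `X` projects isomorphically onto the
plane of the two negative coordinates, so any `w ∈ W` can be written `w = a N + b X + z` with `z`
purely spacelike, and then `η(w,w) = a² + η(z,z)`.

`H(ξ N, ξ X)` is a Gram determinant in `W`. If it vanishes, some nontrivial combination of `ξ N`
and `ξ X` is null, hence a multiple of `X`. Conversely, pairing a linear relation between
`X`, `ξ X`, `ξ N` with `ξ X` and `ξ N` gives a nontrivial kernel vector of the Gram matrix.
-/

/-- The pseudo-Euclidean bilinear form of signature `(2, m-2)` on `ℝ^m`: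
`η(u,v) = -u₀v₀ - u₁v₁ + ∑_{i≥2} uᵢvᵢ`. -/
noncomputable def eta {m : ℕ} (u v : Fin m → ℝ) : ℝ :=
  ∑ i : Fin m, (if (i : ℕ) < 2 then (-1 : ℝ) else 1) * (u i * v i)

lemma eta_comm {m : ℕ} (u v : Fin m → ℝ) : eta u v = eta v u := by
  simp only [eta, mul_comm]

lemma eta_add_left {m : ℕ} (u v w : Fin m → ℝ) : eta (u + v) w = eta u w + eta v w := by
  simp only [eta, ← Finset.sum_add_distrib, Pi.add_apply]
  exact Finset.sum_congr rfl fun i _ => by ring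

lemma eta_smul_left {m : ℕ} (a : ℝ) (u w : Fin m → ℝ) : eta (a • u) w = a * eta u w := by
  simp only [eta, Finset.mul_sum, Pi.smul_apply, smul_eq_mul]
  exact Finset.sum_congr rfl fun i _ => by ring

lemma eta_add_right {m : ℕ} (u v w : Fin m → ℝ) : eta w (u + v) = eta w u + eta w v := by
  rw [eta_comm, eta_add_left, eta_comm u, eta_comm v]

lemma eta_smul_right {m : ℕ} (a : ℝ) (u w : Fin m → ℝ) : eta w (a • u) = a * eta w u := by
  rw [eta_comm, eta_smul_left, eta_comm u]

lemma eta_zero_left {m : ℕ} (w : Fin m → ℝ) : eta 0 w = 0 := by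
  simp [eta]

/-- `η` is positive definite on the vectors whose two negative coordinates vanish. -/
lemma eta_spacelike {m : ℕ} (v : Fin m → ℝ) (hv : ∀ i : Fin m, (i : ℕ) < 2 → v i = 0) :
    0 ≤ eta v v ∧ (eta v v = 0 → v = 0) := by
  have h : eta v v = ∑ i, v i * v i := by
    refine Finset.sum_congr rfl fun i _ => ?_
    split_ifs with hi
    · simp [hv i hi]
    · ring
  rw [h]
  refine ⟨Finset.sum_nonneg fun i _ => mul_self_nonneg _, fun h0 => ?_⟩
  rw [Finset.sum_eq_zero_iff_of_nonneg fun i _ => mul_self_nonneg _] at h0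
  funext i
  simpa using h0 i (Finset.mem_univ i)

/-- A null vector orthogonal to both `N` and `X ≠ 0`, where `N` is a unit timelike vector and `X`
a null vector orthogonal to `N`, is a multiple of `X`. -/
lemma eta_orthogonal {n : ℕ} (hn : 2 ≤ n) (N X w : Fin (n + 1) → ℝ)
    (hN : eta N N = -1) (hX : eta X X = 0) (hNX : eta N X = 0) (hX0 : X ≠ 0)
    (hNw : eta N w = 0) (hXw : eta X w = 0) (hw : eta w w = 0) : ∃ b : ℝ, w = b • X := by
  have hXN : eta X N = 0 := by rw [eta_comm, hNX]
  have hwN : eta w N = 0 := by rw [eta_comm, hNw]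
  have hwX : eta w X = 0 := by rw [eta_comm, hXw]
  let i₀ : Fin (n + 1) := ⟨0, by omega⟩
  let i₁ : Fin (n + 1) := ⟨1, by omega⟩
  have hcoord : ∀ v : Fin (n + 1) → ℝ, v i₀ = 0 → v i₁ = 0 →
      ∀ i : Fin (n + 1), (i : ℕ) < 2 → v i = 0 := by
    intro v h0 h1 i hi
    obtain h | h : (i : ℕ) = 0 ∨ (i : ℕ) = 1 := by omega
    · rwa [show i = i₀ from Fin.ext h]
    · rwa [show i = i₁ from Fin.ext h]
  have hform : ∀ a b c : ℝ, eta (c • w + (a • N + b • X)) (c • w + (a • N + b • X)) = -a ^ 2 := by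
    intro a b c
    simp only [eta_add_left, eta_add_right, eta_smul_left, eta_smul_right, hN, hX, hNX, hXN, hNw,
      hXw, hwN, hwX, hw]
    ring
  -- The projections of `N` and `X` to the negative plane are linearly independent.
  have hdet : N i₀ * X i₁ - N i₁ * X i₀ ≠ 0 := by
    intro hd
    have h0 := (eta_spacelike ((0 : ℝ) • w + (X i₀ • N + (-N i₀) • X))
      (hcoord _ (by simp; ring) (by simp; linarith))).1
    have h1 := (eta_spacelike ((0 : ℝ) • w + (X i₁ • N + (-N i₁) • X))
      (hcoord _ (by simp; linarith) (by simp; ring))).1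
    rw [hform] at h0 h1
    have h0' : X i₀ = 0 := by nlinarith
    have h1' : X i₁ = 0 := by nlinarith
    exact hX0 ((eta_spacelike X (hcoord X h0' h1')).2 hX)
  -- Cramer's rule: subtract the combination of `N`, `X` matching `w` in the negative plane.
  set d := N i₀ * X i₁ - N i₁ * X i₀ with hd
  set a := (w i₁ * X i₀ - w i₀ * X i₁) / d with ha
  set b := (w i₀ * N i₁ - w i₁ * N i₀) / d with hb
  have hz := eta_spacelike ((1 : ℝ) • w + (a • N + b • X)) (hcoord _
    (by simp only [Pi.add_apply, Pi.smul_apply, smul_eq_mul, ha, hb]; field_simp; rw [hd]; ring)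
    (by simp only [Pi.add_apply, Pi.smul_apply, smul_eq_mul, ha, hb]; field_simp; rw [hd]; ring))
  rw [hform] at hz
  have ha0 : a = 0 := by nlinarith [hz.1]
  have hz0 := hz.2 (by rw [ha0]; ring)
  rw [ha0, one_smul, zero_smul, zero_add] at hz0
  exact ⟨-b, by rw [neg_smul]; exact eq_neg_of_add_eq_zero_left hz0⟩

/-- `H(ξN, ξX) = 0` iff the three vectors X, ξX, ξN are linearly dependent. -/
theorem H_zero_iff_linearly_dependent (n : ℕ) (hn : 2 ≤ n)
    (ξ : (Fin (n + 1) → ℝ) →ₗ[ℝ] (Fin (n + 1) → ℝ))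
    (hskew : ∀ u v : Fin (n + 1) → ℝ, eta (ξ u) v + eta u (ξ v) = 0)
    (N X : Fin (n + 1) → ℝ)
    (hN : eta N N = -1) (hX : eta X X = 0) (hNX : eta N X = 0)
    (hXxiN : eta X (ξ N) = 0)
    (hXeig : ¬ (X ≠ 0 ∧ ∃ α : ℝ, ξ X = α • X)) :
    eta (ξ N) (ξ N) * eta (ξ X) (ξ X) - (eta (ξ N) (ξ X)) ^ 2 = 0 ↔
      ¬ LinearIndependent ℝ ![X, ξ X, ξ N] := by
  have hXX' : eta X (ξ X) = 0 := by
    have h := hskew X X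
    rw [eta_comm (ξ X)] at h
    linarith
  have hNN' : eta N (ξ N) = 0 := by
    have h := hskew N N
    rw [eta_comm (ξ N)] at h
    linarith
  have hNX' : eta N (ξ X) = 0 := by
    have h := hskew N X
    rw [eta_comm (ξ N)] at h
    linarith
  have hc := eta_comm (ξ X) (ξ N)
  by_cases hX0 : X = 0
  · subst hX0
    refine iff_of_true ?_ fun h => h.ne_zero 0 rfl
    rw [map_zero, eta_comm (ξ N) 0, eta_zero_left, eta_zero_left]
    ring
  have hrel : LinearIndependent ℝ ![X, ξ X, ξ N] ↔ ∀ c s t : ℝ,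
      c • X + s • ξ X + t • ξ N = 0 → c = 0 ∧ s = 0 ∧ t = 0 := by
    rw [Fintype.linearIndependent_iff]
    refine ⟨fun h c s t hcst => ?_, fun h g hg => ?_⟩
    · have := h ![c, s, t] (by simpa [Fin.sum_univ_three] using hcst)
      exact ⟨this 0, this 1, this 2⟩
    · obtain ⟨h0, h1, h2⟩ := h (g 0) (g 1) (g 2) (by simpa [Fin.sum_univ_three] using hg)
      intro i
      fin_cases i <;> assumption
  rw [hrel]
  constructor
  · intro hH hli
    by_cases hB : eta (ξ X) (ξ X) = 0
    · obtain ⟨b, hb⟩ := eta_orthogonal hn N X (ξ X) hN hX hNX hX0 hNX' hXX' hB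
      have := hli (-b) 1 0 (by rw [hb]; module)
      exact one_ne_zero this.2.1
    -- The component of `ξ N` orthogonal to `ξ X`, rescaled to avoid division, is null.
    · obtain ⟨b, hb⟩ := eta_orthogonal hn N X
        (eta (ξ X) (ξ X) • ξ N + (-eta (ξ N) (ξ X)) • ξ X) hN hX hNX hX0
        (by rw [eta_add_right, eta_smul_right, eta_smul_right, hNN', hNX']; ring)
        (by rw [eta_add_right, eta_smul_right, eta_smul_right, hXxiN, hXX']; ring)
        (by
          simp only [eta_add_right, eta_smul_right, eta_add_left, eta_smul_left, hc]
          linear_combination eta (ξ X) (ξ X) * hH)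
      have := hli (-b) (-eta (ξ N) (ξ X)) (eta (ξ X) (ξ X)) (by
        rw [add_assoc, add_comm (_ • ξ X), hb]; module)
      exact hB this.2.2
  · intro hdep
    by_contra hH
    refine hdep fun c s t h => ?_
    have h1 : s * eta (ξ X) (ξ X) + t * eta (ξ N) (ξ X) = 0 := by
      have := congrArg (fun v => eta v (ξ X)) h
      simpa only [eta_add_left, eta_smul_left, eta_zero_left, hXX', mul_zero, zero_add] using this
    have h2 : s * eta (ξ N) (ξ X) + t * eta (ξ N) (ξ N) = 0 := by
      have := congrArg (fun v => eta v (ξ N)) h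
      simpa only [eta_add_left, eta_smul_left, eta_zero_left, hXxiN, hc, mul_zero, zero_add]
        using this
    have hs : s = 0 := (mul_eq_zero.1 (show s * (eta (ξ N) (ξ N) * eta (ξ X) (ξ X) -
      (eta (ξ N) (ξ X)) ^ 2) = 0 by
        linear_combination eta (ξ N) (ξ N) * h1 - eta (ξ N) (ξ X) * h2)).resolve_right hH
    have ht : t = 0 := (mul_eq_zero.1 (show t * (eta (ξ N) (ξ N) * eta (ξ X) (ξ X) -
      (eta (ξ N) (ξ X)) ^ 2) = 0 by
        linear_combination eta (ξ X) (ξ X) * h2 - eta (ξ N) (ξ X) * h1)).resolve_right hH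
    rw [hs, ht, zero_smul, zero_smul, add_zero, add_zero] at h
    exact ⟨(smul_eq_zero.1 h).resolve_right hX0, hs, ht⟩
end

section
/- Let a, b be real numbers with a² > b² > 0, and define the linear map ξ : ℝ⁴ → ℝ⁴ (coordinates (t,s,x,y)) by ξ(t,s,x,y) = (−b·s + a·y, b·t + a·x, a·s + b·y, a·t − b·x), the type I_a Killing vector of AdS₃. For reals τ, θ₀ set N = (sin τ, cos τ, 0, 0) and X = (cos τ, −sin τ, cos θ₀, sin θ₀). If η(ξN, X) = 0 (equivalently b + a cos(τ − θ₀) = 0), then η(ξN, ξX)² = 4b²(a² − b²); in particular η(ξN, ξX) ≠ 0, so the sign of the intersection parameter λ₀ = −η(ξN,ξX)/η(ξX,ξX) is the same for all τ. -/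
/-- The type I_a Killing vector `b(L_ts − L_xy) + a(K_ty + K_sx)` of AdS₃, as a linear map
on ℝ⁴ with coordinates (t,s,x,y): ξ(t,s,x,y) = (−bs+ay, bt+ax, as+by, at−bx). -/
def xiIa (a b : ℝ) : (Fin 4 → ℝ) → (Fin 4 → ℝ) :=
  fun v => ![-b * v 1 + a * v 3, b * v 0 + a * v 2, a * v 1 + b * v 3, a * v 0 - b * v 2]

lemma eta_xiIa_N_X (a b τ θ₀ : ℝ) :
    eta (xiIa a b ![Real.sin τ, Real.cos τ, 0, 0])
      ![Real.cos τ, -Real.sin τ, Real.cos θ₀, Real.sin θ₀] = b + a * Real.cos (θ₀ - τ) := by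
  simp [eta, xiIa, Fin.sum_univ_four, Real.cos_sub]
  linear_combination b * Real.sin_sq_add_cos_sq τ

lemma eta_xiIa_N_xiIa_X (a b τ θ₀ : ℝ) :
    eta (xiIa a b ![Real.sin τ, Real.cos τ, 0, 0])
      (xiIa a b ![Real.cos τ, -Real.sin τ, Real.cos θ₀, Real.sin θ₀]) =
        2 * a * b * Real.sin (θ₀ - τ) := by
  simp [eta, xiIa, Fin.sum_univ_four, Real.sin_sub]
  ring

/-- for the type I_a Killing vector with a² > b² > 0, on horizontal null
directions one has η(ξN,ξX)² = 4b²(a²−b²); in particular η(ξN,ξX) ≠ 0. -/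
theorem typeIa_sign_fixed (a b τ θ₀ : ℝ)
    (ha : b ^ 2 < a ^ 2) (hb : 0 < b ^ 2)
    (N X : Fin 4 → ℝ)
    (hNdef : N = ![Real.sin τ, Real.cos τ, 0, 0])
    (hXdef : X = ![Real.cos τ, -Real.sin τ, Real.cos θ₀, Real.sin θ₀])
    (horth : eta (xiIa a b N) X = 0) :
    (eta (xiIa a b N) (xiIa a b X)) ^ 2 = 4 * b ^ 2 * (a ^ 2 - b ^ 2) ∧
      eta (xiIa a b N) (xiIa a b X) ≠ 0 := by
  subst hNdef hXdef
  rw [eta_xiIa_N_X] at horth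
  rw [eta_xiIa_N_xiIa_X]
  have hsq : (2 * a * b * Real.sin (θ₀ - τ)) ^ 2 = 4 * b ^ 2 * (a ^ 2 - b ^ 2) := by
    linear_combination 4 * a ^ 2 * b ^ 2 * Real.sin_sq_add_cos_sq (θ₀ - τ) +
      4 * b ^ 2 * (b - a * Real.cos (θ₀ - τ)) * horth
  refine ⟨hsq, fun h0 => ?_⟩
  rw [h0] at hsq
  have hpos : 0 < 4 * b ^ 2 * (a ^ 2 - b ^ 2) := mul_pos (by linarith) (by linarith)
  linarith
end

section
/- Let a, b, c be nonzero real numbers and define the linear map ξ : ℝ⁶ → ℝ⁶ (coordinates (t,s,x,y,z,w)) by ξ(t,s,x,y,z,w) = (a·x, b·y, a·t, b·s, −c·w, c·z), the Killing vector a·K_tx + b·K_sy + c·L_zw of AdS₅. For reals τ, θ₀, φ₀, ρ₀ set N = (sin τ, cos τ, 0, 0, 0, 0) and X = (cos τ, −sin τ, cos ρ₀ sin θ₀, sin ρ₀, cos ρ₀ cos θ₀ cos φ₀, cos ρ₀ cos θ₀ sin φ₀), and assume the orthogonality condition η(ξN, X) = 0 (equivalently a sin τ cos ρ₀ sin θ₀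 + b cos τ sin ρ₀ = 0) and that X is not an eigenvector of ξ. Then H(ξN, ξX) := η(ξN,ξN)·η(ξX,ξX) − η(ξN,ξX)² = 0 if and only if cos θ₀ = 0. Consequently exactly the horizontal null geodesics with cos θ₀ = 0 intersect the singularity |ξ|² = 0. -/
/-- The Killing vector `a K_tx + b K_sy + c L_zw` of AdS₅, as a linear map on ℝ⁶ with
coordinates (t,s,x,y,z,w): ξ(t,s,x,y,z,w) = (ax, by, at, bs, −cw, cz). -/
def xiAdS5 (a b c : ℝ) : (Fin 6 → ℝ) → (Fin 6 → ℝ) :=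
  fun v => ![a * v 2, b * v 3, a * v 0, b * v 1, -c * v 5, c * v 4]

lemma eta_six (u v : Fin 6 → ℝ) :
    eta u v = -(u 0 * v 0) - u 1 * v 1 + u 2 * v 2 + u 3 * v 3 + u 4 * v 4 + u 5 * v 5 := by
  simp [eta, Fin.sum_univ_succ]
  ring

/-- The factorization of `H`, with `S, C`, `r, q`, `p, k`, `f, g` standing for the sine and cosine
of `τ`, `ρ₀`, `θ₀`, `φ₀`. -/
lemma H_factor {a b c S C r q p k f g : ℝ} (hτ : S ^ 2 + C ^ 2 = 1) (hρ : r ^ 2 + q ^ 2 = 1)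
    (hθ : p ^ 2 + k ^ 2 = 1) (hφ : f ^ 2 + g ^ 2 = 1)
    (h : a * S * (q * p) + b * C * r = 0) :
    ((a * S) ^ 2 + (b * C) ^ 2) * (-(a * (q * p)) ^ 2 - (b * r) ^ 2 + (a * C) ^ 2 + (b * S) ^ 2
        + (c * (q * k * f)) ^ 2 + (c * (q * k * g)) ^ 2) - (S * C * (a ^ 2 - b ^ 2)) ^ 2
      = (a ^ 2 * b ^ 2 + c ^ 2 * ((a * S) ^ 2 + (b * C) ^ 2)) * (q * k) ^ 2 := by
  have hxy : ((a * S) ^ 2 + (b * C) ^ 2) * ((a * (q * p)) ^ 2 + (b * r) ^ 2)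
      = a ^ 2 * b ^ 2 * ((q * p) ^ 2 + r ^ 2) := by
    linear_combination (a ^ 2 - b ^ 2) * (a * S * (q * p) - b * C * r) * h
      + a ^ 2 * b ^ 2 * ((q * p) ^ 2 + r ^ 2) * hτ
  have hR : (q * k) ^ 2 = 1 - (q * p) ^ 2 - r ^ 2 := by
    linear_combination q ^ 2 * hθ + hρ
  linear_combination -hxy + c ^ 2 * ((a * S) ^ 2 + (b * C) ^ 2) * (q * k) ^ 2 * hφ
    + a ^ 2 * b ^ 2 * (S ^ 2 + C ^ 2 + 1) * hτ - a ^ 2 * b ^ 2 * hR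

/-- for the AdS₅ Killing vector with a, b, c ≠ 0 and horizontal null
direction X (orthogonality η(ξN, X) = 0, X not an eigenvector of ξ),
H(ξN, ξX) = 0 iff cos θ₀ = 0; exactly those horizontal null geodesics intersect
the singularity |ξ|² = 0. -/
theorem AdS5_H_zero_iff_cos_theta_zero (a b c τ θ₀ φ₀ ρ₀ : ℝ)
    (ha : a ≠ 0) (hb : b ≠ 0) (hc : c ≠ 0)
    (N X : Fin 6 → ℝ)
    (hNdef : N = ![Real.sin τ, Real.cos τ, 0, 0, 0, 0])
    (hXdef : X = ![Real.cos τ, -Real.sin τ, Real.cos ρ₀ * Real.sin θ₀, Real.sin ρ₀,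
      Real.cos ρ₀ * Real.cos θ₀ * Real.cos φ₀, Real.cos ρ₀ * Real.cos θ₀ * Real.sin φ₀])
    (horth : eta (xiAdS5 a b c N) X = 0)
    (hXeig : ¬ (X ≠ 0 ∧ ∃ α : ℝ, xiAdS5 a b c X = α • X)) :
    eta (xiAdS5 a b c N) (xiAdS5 a b c N) * eta (xiAdS5 a b c X) (xiAdS5 a b c X)
        - (eta (xiAdS5 a b c N) (xiAdS5 a b c X)) ^ 2 = 0 ↔
      Real.cos θ₀ = 0 := by
  have hτ := Real.sin_sq_add_cos_sq τ
  have hρ := Real.sin_sq_add_cos_sq ρ₀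
  have h : a * Real.sin τ * (Real.cos ρ₀ * Real.sin θ₀) + b * Real.cos τ * Real.sin ρ₀ = 0 := by
    simpa [eta_six, xiAdS5, hNdef, hXdef] using horth
  have hH : eta (xiAdS5 a b c N) (xiAdS5 a b c N) * eta (xiAdS5 a b c X) (xiAdS5 a b c X)
        - (eta (xiAdS5 a b c N) (xiAdS5 a b c X)) ^ 2
      = (a ^ 2 * b ^ 2 + c ^ 2 * ((a * Real.sin τ) ^ 2 + (b * Real.cos τ) ^ 2))
        * (Real.cos ρ₀ * Real.cos θ₀) ^ 2 := by
    rw [← H_factor hτ hρ (Real.sin_sq_add_cos_sq θ₀) (Real.sin_sq_add_cos_sq φ₀) h]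
    simp [eta_six, xiAdS5, hNdef, hXdef]
    ring
  have hpos : 0 < a ^ 2 * b ^ 2 + c ^ 2 * ((a * Real.sin τ) ^ 2 + (b * Real.cos τ) ^ 2) := by
    positivity
  have hq : Real.cos ρ₀ ≠ 0 := by
    intro hq
    have hr : Real.sin ρ₀ ^ 2 = 1 := by simpa [hq] using hρ
    have hr0 : Real.sin ρ₀ ≠ 0 := by
      intro h0
      simp [h0] at hr
    have hC : Real.cos τ = 0 := by simpa [hq, hb, hr0] using h
    have hS : Real.sin τ ^ 2 = 1 := by simpa [hC] using hτ
    refine hXeig ⟨fun h0 => hr0 ?_, -b * Real.sin τ * Real.sin ρ₀, ?_⟩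
    · simpa [hXdef] using congrFun h0 3
    · ext i
      fin_cases i <;> simp [xiAdS5, hXdef, hq, hC]
      · linear_combination -b * Real.sin ρ₀ * hS
      · linear_combination -b * Real.sin τ * hr
  rw [hH]
  simp [hpos.ne', hq]
end
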